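/- arXiv:1711.08551 — 3 statements merged into one kernel-verified Lean document; each statement's English description precedes it below -/
import Mathlib

section
/- Let f_l : ℝⁿ → ℝ (l = 1,…,p), g_i : ℝⁿ → ℝ (i = 1,…,m) and h_j : ℝⁿ → ℝ (j = 1,…,r) be continuously differentiable. If x̄ is a local weak efficient solution of (MOP), then there exist sequences {x^k} ⊂ ℝⁿ and {(λ^k, μ^k, τ^k)} ⊂ ℝ^p_+ × ℝ^m_+ × ℝ^r such that: (A0) x^k → x̄; (A1) ‖Σ_{l=1}^p λ_l^k ∇f_l(x^k) + Σ_{i=1}^m μ_i^k ∇g_i(x^k) + Σ_{j=1}^r τ_j^k ∇h_j(x^k)‖ → 0 as k → ∞; (A2) Σ_{l=1}^p λ_l^k = 1 for every k; and (A3) for each i with g_i(x̄) < 0 one has μ_i^k = 0 for all sufficiently large k. -/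
open Filter Topology

/-!
Weak efficiency of `a` says that `max_l (f_l x - f_l a)` is nonnegative on the feasible points near
`a`. Smooth this maximum to a log-sum-exp with parameter `t`, add `t` times the quadratic penalty
`P = ∑ i, (g_i⁺)² + ∑ j, h_j²` of the constraints and the proximal term `‖x - a‖²`, and minimize
the sum over a small closed ball around `a`. The minimum is at most the value `t⁻¹ log p` at `a`, so
as `t → ∞` every cluster point of the minimizers is feasible, and then the proximal term forces it
to be `a`. Hence the minimizers eventually lie inside the ball, where the gradient vanishes: the
softmax weights of the log-sum-exp are the `λ_l` (so they sum to one), `2 t g_i⁺` and `2 t h_j` are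
the `μ_i` and `τ_j`, and the remaining term `2 (x - a)` tends to zero.
-/

theorem hasDerivAt_posPart_sq (t : ℝ) : HasDerivAt (fun s : ℝ => s⁺ ^ 2) (2 * t⁺) t := by
  have hremainder (s : ℝ) : |s⁺ ^ 2 - t⁺ ^ 2 - (s - t) * (2 * t⁺)| ≤ (s - t) ^ 2 := by
    rw [abs_le]
    rcases le_total s 0 with hs | hs <;> rcases le_total t 0 with ht | ht <;>
      simp only [posPart_of_nonneg, posPart_of_nonpos, hs, ht] <;> constructor <;> nlinarith
  rw [hasDerivAt_iff_isLittleO]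
  refine (Asymptotics.IsBigO.of_bound' (Eventually.of_forall fun s => ?_)).trans_isLittleO
    (Asymptotics.isLittleO_pow_sub_sub t one_lt_two)
  simpa using hremainder s

theorem tendsto_of_penalized_le {X α : Type*} [MetricSpace X] {F : Filter α} {K : Set X}
    (hK : IsCompact K) {φ P : X → ℝ} (hφ : ContinuousOn φ K) (hP : ContinuousOn P K)
    (hP_nonneg : ∀ y ∈ K, 0 ≤ P y) (hφ_nonneg : ∀ y ∈ K, P y = 0 → 0 ≤ φ y) {a : X}
    {t ε : α → ℝ} (ht : Tendsto t F atTop) (hε : Tendsto ε F (𝓝 0)) {x : α → X}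
    (hxK : ∀ᶠ k in F, x k ∈ K)
    (hx : ∀ᶠ k in F, φ (x k) + t k * P (x k) + dist (x k) a ^ 2 ≤ ε k) :
    Tendsto x F (𝓝 a) := by
  refine hK.tendsto_nhds_of_unique_mapClusterPt hxK fun y hyK hy => ?_
  obtain ⟨U, hUF, hxy⟩ := mapClusterPt_iff_ultrafilter.1 hy
  have hxy_within : Tendsto x U (𝓝[K] y) := tendsto_nhdsWithin_iff.2 ⟨hxy, hxK.filter_mono hUF⟩
  have hφ_lim : Tendsto (fun k => φ (x k)) U (𝓝 (φ y)) := (hφ y hyK).tendsto.comp hxy_within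
  have hP_lim : Tendsto (fun k => P (x k)) U (𝓝 (P y)) := (hP y hyK).tendsto.comp hxy_within
  have ht_pos : ∀ᶠ k in (U : Filter α), 0 < t k := (ht.mono_left hUF).eventually_gt_atTop 0
  have hPy : P y = 0 := by
    have hquot : Tendsto (fun k => (ε k - φ (x k)) / t k) U (𝓝 0) :=
      ((hε.mono_left hUF).sub hφ_lim).div_atTop (ht.mono_left hUF)
    refine le_antisymm (le_of_tendsto_of_tendsto hP_lim hquot ?_) (hP_nonneg y hyK)
    filter_upwards [hx.filter_mono hUF, ht_pos] with k hk htk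
    rw [le_div_iff₀ htk]
    linarith [sq_nonneg (dist (x k) a)]
  have hdist : φ y + dist y a ^ 2 ≤ 0 := by
    refine le_of_tendsto_of_tendsto (hφ_lim.add ((hxy.dist tendsto_const_nhds).pow 2))
      (hε.mono_left hUF) ?_
    filter_upwards [hx.filter_mono hUF, hxK.filter_mono hUF, ht_pos] with k hk hkK htk
    linarith [mul_nonneg htk.le (hP_nonneg _ hkK)]
  have hsq : dist y a ^ 2 = 0 :=
    le_antisymm (by linarith [hφ_nonneg y hyK hPy]) (sq_nonneg _)
  exact dist_eq_zero.1 (sq_eq_zero_iff.1 hsq)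

section LogSumExp

variable {ι : Type*} [Fintype ι]

/-- The log-sum-exp smoothing of `max_l u_l`. The larger the parameter `t > 0`, the closer it is to
the maximum. -/
noncomputable def logSumExp (t : ℝ) (u : ι → ℝ) : ℝ :=
  t⁻¹ * Real.log (∑ l, Real.exp (t * u l))

/-- The softmax weights of `u` with parameter `t`, which are the partial derivatives of
`logSumExp t` at `u`. -/
noncomputable def softmaxWeight (t : ℝ) (u : ι → ℝ) (l : ι) : ℝ :=
  Real.exp (t * u l) / ∑ l', Real.exp (t * u l')

theorem softmaxWeight_nonneg (t : ℝ) (u : ι → ℝ) (l : ι) : 0 ≤ softmaxWeight t u l := by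
  unfold softmaxWeight
  positivity

theorem le_logSumExp {t : ℝ} (ht : 0 < t) (u : ι → ℝ) (l : ι) : u l ≤ logSumExp t u := by
  rw [logSumExp, le_inv_mul_iff₀ ht, ← Real.log_exp (t * u l)]
  exact Real.log_le_log (Real.exp_pos _)
    (Finset.single_le_sum (f := fun l => Real.exp (t * u l)) (fun _ _ => (Real.exp_pos _).le)
      (Finset.mem_univ l))

theorem logSumExp_zero (t : ℝ) :
    logSumExp t (fun _ : ι => 0) = t⁻¹ * Real.log (Fintype.card ι) := by
  simp [logSumExp]

variable [Nonempty ι]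

theorem sum_exp_pos (u : ι → ℝ) : 0 < ∑ l, Real.exp (u l) :=
  Finset.sum_pos (fun _ _ => Real.exp_pos _) Finset.univ_nonempty

theorem sum_softmaxWeight (t : ℝ) (u : ι → ℝ) : ∑ l, softmaxWeight t u l = 1 := by
  simp only [softmaxWeight, ← Finset.sum_div]
  exact div_self (sum_exp_pos fun l => t * u l).ne'

theorem continuous_logSumExp (t : ℝ) : Continuous (logSumExp t : (ι → ℝ) → ℝ) :=
  continuous_const.mul <| Continuous.log (by fun_prop) fun u => (sum_exp_pos fun l => t * u l).ne'

theorem hasFDerivAt_logSumExp {E : Type*} [NormedAddCommGroup E] [NormedSpace ℝ E]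
    {t : ℝ} (ht : t ≠ 0) {u : ι → E → ℝ} {u' : ι → E →L[ℝ] ℝ} {x : E}
    (hu : ∀ l, HasFDerivAt (u l) (u' l) x) :
    HasFDerivAt (fun y => logSumExp t fun l => u l y)
      (∑ l, softmaxWeight t (fun l => u l x) l • u' l) x := by
  have hsum := HasFDerivAt.fun_sum (u := Finset.univ) fun l _ => ((hu l).const_mul t).exp
  refine ((hsum.log (sum_exp_pos fun l => t * u l x).ne').const_mul t⁻¹).congr_fderiv ?_
  simp only [Finset.smul_sum, smul_smul, softmaxWeight]
  refine Finset.sum_congr rfl fun l _ => ?_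
  congr 1
  field_simp

end LogSumExp

section QuadraticPenalty

variable {κ σ E : Type*} [Fintype κ] [Fintype σ] {g : κ → E → ℝ} {h : σ → E → ℝ}

/-- The quadratic exterior penalty of the constraints `g ≤ 0` and `h = 0`. -/
noncomputable def quadraticPenalty (g : κ → E → ℝ) (h : σ → E → ℝ) (x : E) : ℝ :=
  ∑ i, (g i x)⁺ ^ 2 + ∑ j, h j x ^ 2

theorem quadraticPenalty_nonneg (g : κ → E → ℝ) (h : σ → E → ℝ) (x : E) :
    0 ≤ quadraticPenalty g h x := by
  unfold quadraticPenalty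
  positivity

theorem quadraticPenalty_eq_zero_iff {x : E} :
    quadraticPenalty g h x = 0 ↔ (∀ i, g i x ≤ 0) ∧ ∀ j, h j x = 0 := by
  rw [quadraticPenalty, add_eq_zero_iff_of_nonneg (by positivity) (by positivity),
    Finset.sum_eq_zero_iff_of_nonneg fun _ _ => by positivity,
    Finset.sum_eq_zero_iff_of_nonneg fun _ _ => by positivity]
  simp

theorem continuousOn_quadraticPenalty [TopologicalSpace E] {K : Set E}
    (hg : ∀ i, ContinuousOn (g i) K) (hh : ∀ j, ContinuousOn (h j) K) :
    ContinuousOn (quadraticPenalty g h) K := by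
  have hsq : Continuous fun s : ℝ => s⁺ ^ 2 :=
    continuous_iff_continuousAt.2 fun t => (hasDerivAt_posPart_sq t).continuousAt
  exact (continuousOn_finsetSum _ fun i _ => hsq.comp_continuousOn (hg i)).add
    (continuousOn_finsetSum _ fun j _ => (hh j).pow 2)

theorem hasFDerivAt_quadraticPenalty [NormedAddCommGroup E] [NormedSpace ℝ E]
    {g' : κ → E →L[ℝ] ℝ} {h' : σ → E →L[ℝ] ℝ} {x : E}
    (hg : ∀ i, HasFDerivAt (g i) (g' i) x) (hh : ∀ j, HasFDerivAt (h j) (h' j) x) :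
    HasFDerivAt (quadraticPenalty g h)
      (∑ i, (2 * (g i x)⁺) • g' i + ∑ j, (2 * h j x) • h' j) x := by
  refine (HasFDerivAt.fun_sum fun i _ => ?_).add (HasFDerivAt.fun_sum fun j _ => ?_)
  · exact (hasDerivAt_posPart_sq (g i x)).comp_hasFDerivAt x (hg i)
  · simpa using (hh j).pow 2

end QuadraticPenalty

section SmoothPenalty

variable {ι κ σ E : Type*} [Fintype ι] [Fintype κ] [Fintype σ] [NormedAddCommGroup E]
  {f : ι → E → ℝ} {g : κ → E → ℝ} {h : σ → E → ℝ} {a : E}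

/-- The penalty function whose minimizers yield the approximate multipliers at `a`: the smoothed
maximal increase of the objectives from `a`, plus the penalized constraints and a proximal term.
The parameter `t` is both the smoothing parameter and the penalty parameter. -/
noncomputable def smoothPenalty (f : ι → E → ℝ) (g : κ → E → ℝ) (h : σ → E → ℝ) (a : E) (t : ℝ)
    (x : E) : ℝ :=
  logSumExp t (fun l => f l x - f l a) + t * quadraticPenalty g h x + ‖x - a‖ ^ 2

theorem smoothPenalty_self (hg : ∀ i, g i a ≤ 0) (hh : ∀ j, h j a = 0) (t : ℝ) :
    smoothPenalty f g h a t a = t⁻¹ * Real.log (Fintype.card ι) := by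
  simp [smoothPenalty, quadraticPenalty_eq_zero_iff.2 ⟨hg, hh⟩, logSumExp_zero]

variable [Nonempty ι]

theorem continuousOn_smoothPenalty {K : Set E} (hf : ∀ l, ContinuousOn (f l) K)
    (hg : ∀ i, ContinuousOn (g i) K) (hh : ∀ j, ContinuousOn (h j) K) (a : E) (t : ℝ) :
    ContinuousOn (smoothPenalty f g h a t) K := by
  have hobjective : ContinuousOn (fun x => logSumExp t fun l => f l x - f l a) K :=
    (continuous_logSumExp t).comp_continuousOn
      (continuousOn_pi.2 fun l => (hf l).sub continuousOn_const)
  exact (hobjective.add (continuousOn_const.mul (continuousOn_quadraticPenalty hg hh))).add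
    (by fun_prop)

theorem tendsto_of_smoothPenalty_le {K : Set E} (hK : IsCompact K)
    (hf : ∀ l, ContinuousOn (f l) K) (hg : ∀ i, ContinuousOn (g i) K)
    (hh : ∀ j, ContinuousOn (h j) K) (hga : ∀ i, g i a ≤ 0) (hha : ∀ j, h j a = 0)
    (hweak : ∀ y ∈ K, ((∀ i, g i y ≤ 0) ∧ ∀ j, h j y = 0) → ¬∀ l, f l y < f l a)
    {α : Type*} {F : Filter α} {t : α → ℝ} (ht : Tendsto t F atTop) {x : α → E}
    (hxK : ∀ᶠ k in F, x k ∈ K)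
    (hx : ∀ᶠ k in F, smoothPenalty f g h a (t k) (x k) ≤ smoothPenalty f g h a (t k) a) :
    Tendsto x F (𝓝 a) := by
  let maxIncrease (y : E) : ℝ := Finset.univ.sup' Finset.univ_nonempty fun l => f l y - f l a
  have hcont : ContinuousOn maxIncrease K :=
    ContinuousOn.finset_sup'_apply _ fun l _ => (hf l).sub continuousOn_const
  have hnonneg : ∀ y ∈ K, quadraticPenalty g h y = 0 → 0 ≤ maxIncrease y := fun y hyK hy => by
    obtain ⟨l, hl⟩ := not_forall.1 (hweak y hyK (quadraticPenalty_eq_zero_iff.1 hy))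
    exact (Finset.le_sup'_iff _).2 ⟨l, Finset.mem_univ l, sub_nonneg.2 (not_lt.1 hl)⟩
  have hbound : Tendsto (fun k => (t k)⁻¹ * Real.log (Fintype.card ι)) F (𝓝 0) := by
    simpa using ht.inv_tendsto_atTop.mul_const (Real.log (Fintype.card ι))
  refine tendsto_of_penalized_le hK hcont (continuousOn_quadraticPenalty hg hh)
    (fun y _ => quadraticPenalty_nonneg g h y) hnonneg ht hbound hxK ?_
  filter_upwards [hx, ht.eventually_gt_atTop 0] with k hk htk
  have hmax : maxIncrease (x k) ≤ logSumExp (t k) fun l => f l (x k) - f l a :=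
    Finset.sup'_le _ _ fun l _ => le_logSumExp htk (fun l => f l (x k) - f l a) l
  rw [smoothPenalty_self hga hha, smoothPenalty] at hk
  rw [dist_eq_norm]
  linarith

theorem exists_tendsto_isLocalMin_smoothPenalty {K : Set E} (hK : IsCompact K) (haK : K ∈ 𝓝 a)
    (hf : ∀ l, ContinuousOn (f l) K) (hg : ∀ i, ContinuousOn (g i) K)
    (hh : ∀ j, ContinuousOn (h j) K) (hga : ∀ i, g i a ≤ 0) (hha : ∀ j, h j a = 0)
    (hweak : ∀ y ∈ K, ((∀ i, g i y ≤ 0) ∧ ∀ j, h j y = 0) → ¬∀ l, f l y < f l a)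
    {α : Type*} {F : Filter α} {t : α → ℝ} (ht : Tendsto t F atTop) :
    ∃ x : α → E, Tendsto x F (𝓝 a) ∧
      ∀ᶠ k in F, IsLocalMin (smoothPenalty f g h a (t k)) (x k) := by
  have ha := mem_of_mem_nhds haK
  choose x hxK hxmin using fun k =>
    hK.exists_isMinOn ⟨a, ha⟩ (continuousOn_smoothPenalty hf hg hh a (t k))
  have hx : Tendsto x F (𝓝 a) := tendsto_of_smoothPenalty_le hK hf hg hh hga hha hweak ht
    (Eventually.of_forall hxK) (Eventually.of_forall fun k => hxmin k ha)
  refine ⟨x, hx, ?_⟩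
  filter_upwards [hx.eventually (eventually_mem_nhds_iff.2 haK)] with k hk
  exact (hxmin k).isLocalMin hk

variable [InnerProductSpace ℝ E] [CompleteSpace E]

theorem hasGradientAt_smoothPenalty {f' : ι → E} {g' : κ → E} {h' : σ → E} {x : E} (a : E) {t : ℝ}
    (ht : t ≠ 0) (hf : ∀ l, HasGradientAt (f l) (f' l) x) (hg : ∀ i, HasGradientAt (g i) (g' i) x)
    (hh : ∀ j, HasGradientAt (h j) (h' j) x) :
    HasGradientAt (smoothPenalty f g h a t)
      (∑ l, softmaxWeight t (fun l => f l x - f l a) l • f' l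
        + ∑ i, (t * (2 * (g i x)⁺)) • g' i + ∑ j, (t * (2 * h j x)) • h' j
        + (2 : ℝ) • (x - a)) x := by
  have hobjective := hasFDerivAt_logSumExp ht fun l => (hf l).hasFDerivAt.sub_const (f l a)
  have hpenalty := hasFDerivAt_quadraticPenalty (fun i => (hg i).hasFDerivAt)
    fun j => (hh j).hasFDerivAt
  have hproximal := ((hasFDerivAt_id x).sub_const a).norm_sq
  rw [hasGradientAt_iff_hasFDerivAt]
  refine ((hobjective.add (hpenalty.const_mul t)).add hproximal).congr_fderiv ?_
  ext v
  simp [Finset.mul_sum, mul_assoc, add_assoc]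

theorem sum_gradient_eq_of_isLocalMin_smoothPenalty {x : E} {t : ℝ} (ht : t ≠ 0)
    (hf : ∀ l, DifferentiableAt ℝ (f l) x) (hg : ∀ i, DifferentiableAt ℝ (g i) x)
    (hh : ∀ j, DifferentiableAt ℝ (h j) x) (hmin : IsLocalMin (smoothPenalty f g h a t) x) :
    ∑ l, softmaxWeight t (fun l => f l x - f l a) l • gradient (f l) x
      + ∑ i, (t * (2 * (g i x)⁺)) • gradient (g i) x
      + ∑ j, (t * (2 * h j x)) • gradient (h j) x = (2 : ℝ) • (a - x) := by
  have hgrad := hasGradientAt_smoothPenalty a ht (fun l => (hf l).hasGradientAt)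
    (fun i => (hg i).hasGradientAt) fun j => (hh j).hasGradientAt
  have hzero := (map_eq_zero_iff _ (InnerProductSpace.toDual ℝ E).injective).1
    (hmin.hasFDerivAt_eq_zero hgrad.hasFDerivAt)
  rw [eq_neg_of_add_eq_zero_left hzero, ← smul_neg, neg_sub]

end SmoothPenalty

theorem akkt_necessary_smooth_general {ι κ σ E : Type*} [Fintype ι] [Nonempty ι] [Fintype κ]
    [Fintype σ] [NormedAddCommGroup E] [InnerProductSpace ℝ E] [FiniteDimensional ℝ E]
    {f : ι → E → ℝ} {g : κ → E → ℝ} {h : σ → E → ℝ} {a : E}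
    (hf : ∀ l, ∀ᶠ y in 𝓝 a, DifferentiableAt ℝ (f l) y)
    (hg : ∀ i, ∀ᶠ y in 𝓝 a, DifferentiableAt ℝ (g i) y)
    (hh : ∀ j, ∀ᶠ y in 𝓝 a, DifferentiableAt ℝ (h j) y)
    (hga : ∀ i, g i a ≤ 0) (hha : ∀ j, h j a = 0)
    (hweak : ∀ᶠ y in 𝓝 a, ((∀ i, g i y ≤ 0) ∧ ∀ j, h j y = 0) → ¬∀ l, f l y < f l a) :
    ∃ (x : ℕ → E) (lam : ℕ → ι → ℝ) (mu : ℕ → κ → ℝ) (tau : ℕ → σ → ℝ),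
      (∀ k l, 0 ≤ lam k l) ∧ (∀ k i, 0 ≤ mu k i) ∧
      Tendsto x atTop (𝓝 a) ∧
      Tendsto (fun k => ‖∑ l, lam k l • gradient (f l) (x k)
        + ∑ i, mu k i • gradient (g i) (x k)
        + ∑ j, tau k j • gradient (h j) (x k)‖) atTop (𝓝 0) ∧
      (∀ k, ∑ l, lam k l = 1) ∧
      (∀ i, g i a < 0 → ∀ᶠ k in atTop, mu k i = 0) := by
  rw [← eventually_all] at hf hg hh
  obtain ⟨ε, hε, hball⟩ :=
    Metric.nhds_basis_closedBall.eventually_iff.1 (hf.and (hg.and (hh.and hweak)))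
  obtain ⟨x, hx, hmin⟩ := exists_tendsto_isLocalMin_smoothPenalty (isCompact_closedBall a ε)
    (Metric.closedBall_mem_nhds a hε)
    (fun l y hy => ((hball hy).1 l).continuousAt.continuousWithinAt)
    (fun i y hy => ((hball hy).2.1 i).continuousAt.continuousWithinAt)
    (fun j y hy => ((hball hy).2.2.1 j).continuousAt.continuousWithinAt)
    hga hha (fun y hy => (hball hy).2.2.2) tendsto_natCast_atTop_atTop
  refine ⟨x, fun k => softmaxWeight k fun l => f l (x k) - f l a,
    fun k i => k * (2 * (g i (x k))⁺), fun k j => k * (2 * h j (x k)),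
    fun k => softmaxWeight_nonneg _ _, fun k i => by positivity, hx, ?_,
    fun k => sum_softmaxWeight _ _, fun i hi => ?_⟩
  · have hresidual : Tendsto (fun k => ‖(2 : ℝ) • (a - x k)‖) atTop (𝓝 0) := by
      simpa using ((hx.const_sub a).const_smul (2 : ℝ)).norm
    refine hresidual.congr' ?_
    filter_upwards [hmin, hx.eventually hf, hx.eventually hg, hx.eventually hh,
      eventually_ne_atTop 0] with k hk hfk hgk hhk hk0
    rw [sum_gradient_eq_of_isLocalMin_smoothPenalty (Nat.cast_ne_zero.2 hk0) hfk hgk hhk hk]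
  · have hgi : ContinuousAt (g i) a := (hg.self_of_nhds i).continuousAt
    filter_upwards [hx.eventually (hgi.eventually_lt_const hi)] with k hk
    simp [posPart_of_nonpos hk.le]

/-- **AKKT necessary optimality condition** (smooth case).
If `x̄` is a local weak efficient solution of the multiobjective problem
`min f(x)` s.t. `g(x) ≤ 0`, `h(x) = 0`, with all data continuously
differentiable, then there exist sequences satisfying (A0)–(A3). -/
theorem akkt_necessary_smooth
    {n p m r : ℕ} (hp : 0 < p)
    (f : Fin p → EuclideanSpace ℝ (Fin n) → ℝ)
    (g : Fin m → EuclideanSpace ℝ (Fin n) → ℝ)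
    (h : Fin r → EuclideanSpace ℝ (Fin n) → ℝ)
    (hf : ∀ l, ContDiff ℝ 1 (f l))
    (hg : ∀ i, ContDiff ℝ 1 (g i))
    (hh : ∀ j, ContDiff ℝ 1 (h j))
    (xbar : EuclideanSpace ℝ (Fin n))
    (hxg : ∀ i, g i xbar ≤ 0) (hxh : ∀ j, h j xbar = 0)
    (hweak : ∃ U ∈ 𝓝 xbar, ∀ x ∈ U,
      ((∀ i, g i x ≤ 0) ∧ (∀ j, h j x = 0)) → ¬ (∀ l, f l x < f l xbar)) :
    ∃ (x : ℕ → EuclideanSpace ℝ (Fin n))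
      (lam : ℕ → Fin p → ℝ) (mu : ℕ → Fin m → ℝ) (tau : ℕ → Fin r → ℝ),
      (∀ k l, 0 ≤ lam k l) ∧ (∀ k i, 0 ≤ mu k i) ∧
      -- (A0)
      Tendsto x atTop (𝓝 xbar) ∧
      -- (A1)
      Tendsto (fun k => ‖∑ l, lam k l • gradient (f l) (x k)
        + ∑ i, mu k i • gradient (g i) (x k)
        + ∑ j, tau k j • gradient (h j) (x k)‖) atTop (𝓝 0) ∧
      -- (A2)
      (∀ k, ∑ l, lam k l = 1) ∧
      -- (A3)
      (∀ i, g i xbar < 0 → ∀ᶠ k in atTop, mu k i = 0) := by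
  have : Nonempty (Fin p) := Fin.pos_iff_nonempty.1 hp
  exact akkt_necessary_smooth_general
    (fun l => .of_forall ((hf l).differentiable one_ne_zero))
    (fun i => .of_forall ((hg i).differentiable one_ne_zero))
    (fun j => .of_forall ((hh j).differentiable one_ne_zero))
    hxg hxh (eventually_iff_exists_mem.2 hweak)
end

section
/- Let f_l : ℝⁿ → ℝ (l = 1,…,p) and ψ : ℝⁿ → ℝ be differentiable at a point x₀ ∈ ℝⁿ, and suppose x₀ is a local minimizer of the function x ↦ max{ f_l(x) : l = 1,…,p } + ψ(x). Then there exist λ_1,…,λ_p ≥ 0 with Σ_{l=1}^p λ_l = 1, λ_l = 0 whenever f_l(x₀) < max{ f_1(x₀),…,f_p(x₀) }, and Σ_{l=1}^p λ_l ∇f_l(x₀) + ∇ψ(x₀) = 0. -/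
/-!
For every direction `d`, one of the functions `f i` attains the maximum at points `x + t • d` with
`t > 0` arbitrarily small. On the set where this `f i` is the maximum, `f i + ψ` has a local
minimum at `x` and `d` is tangent to this set, so the derivative of `f i + ψ` along `d` is
nonnegative. Thus no direction makes all the active derivatives negative, and Gordan's alternative
turns this into a vanishing convex combination of them: a functional separating the subspace of
vectors of directional derivatives from the open negative orthant has the multipliers, up to
scaling, as its coordinates.
-/

open Filter Topology

theorem linearMap_eq_zero_of_forall_le {K M : Type*} [Field K] [LinearOrder K]
    [IsStrictOrderedRing K] [AddCommMonoid M] [Module K M] {φ : M →ₗ[K] K} {c : K}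
    (h : ∀ x, c ≤ φ x) : φ = 0 := by
  ext x
  by_contra hx
  have hscaled : c ≤ c - 1 := by
    simpa [div_mul_cancel₀ _ hx] using h (((c - 1) / φ x) • x)
  linarith

section Gordan

variable {ι : Type*} {A : Set ι}

theorem exists_dual_nonpos_of_forall_mem_exists_nonneg (hA : A.Finite) (S : Submodule ℝ (ι → ℝ))
    (h : ∀ y ∈ S, ∃ i ∈ A, 0 ≤ y i) :
    ∃ g : StrongDual ℝ (ι → ℝ),
      (∀ y, (∀ i ∈ A, y i ≤ 0) → g y ≤ 0) ∧ 0 < g 1 ∧ ∀ y ∈ S, g y = 0 := by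
  let C : Set (ι → ℝ) := A.pi fun _ => Set.Iio 0
  have hdisj : Disjoint C S := Set.disjoint_left.mpr fun y hyC hyS =>
    let ⟨i, hi, hyi⟩ := h y hyS
    (hyC i hi).not_ge hyi
  obtain ⟨g, u, hgC, hgS⟩ := geometric_hahn_banach_open
    (convex_pi fun _ _ => convex_Iio 0) (isOpen_set_pi hA fun _ _ => isOpen_Iio) S.convex hdisj
  have hu : u ≤ 0 := by simpa using hgS 0 S.zero_mem
  have hclosure : closure C ⊆ {y | g y ≤ 0} :=
    closure_minimal (fun y hy => ((hgC y hy).trans_le hu).le)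
      (isClosed_le g.continuous continuous_const)
  have hgS_zero : g.toLinearMap ∘ₗ S.subtype = 0 :=
    linearMap_eq_zero_of_forall_le fun y => hgS y y.2
  refine ⟨g, fun y hy => hclosure ?_, ?_, fun y hy => congr($hgS_zero ⟨y, hy⟩)⟩
  · simpa [C, closure_pi_set] using hy
  · have hneg : g (-1) < u := hgC (-1) fun i _ => by simp
    rw [map_neg] at hneg
    linarith

/-- **Gordan's alternative**, with the multipliers supported on `A`. -/
theorem exists_mem_stdSimplex_sum_smul_eq_zero [Fintype ι] {E : Type*} [AddCommMonoid E]
    [Module ℝ E] (φ : ι → E →ₗ[ℝ] ℝ) (h : ∀ d, ∃ i ∈ A, 0 ≤ φ i d) :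
    ∃ w ∈ stdSimplex ℝ ι, (∀ i ∉ A, w i = 0) ∧ ∑ i, w i • φ i = 0 := by
  classical
  obtain ⟨g, hg, hg_one, hg_range⟩ := exists_dual_nonpos_of_forall_mem_exists_nonneg A.toFinite
    (LinearMap.range (LinearMap.pi φ)) (by rintro _ ⟨d, rfl⟩; exact h d)
  let c : ι → ℝ := fun i => g (Pi.single i 1)
  have hg_apply (y : ι → ℝ) : g y = ∑ i, c i * y i := by
    conv_lhs => rw [pi_eq_sum_univ' y]
    simp [c, mul_comm]
  have hc_nonneg (i : ι) : 0 ≤ c i := by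
    have hle : g (-Pi.single i 1) ≤ 0 := hg _ fun j _ => by
      simpa using (Pi.single_nonneg.mpr zero_le_one : (0 : ι → ℝ) ≤ Pi.single i 1) j
    simpa [c] using hle
  have hc_zero (i : ι) (hi : i ∉ A) : c i = 0 := by
    refine (hg _ fun j hj => ?_).antisymm (hc_nonneg i)
    rw [Pi.single_eq_of_ne (ne_of_mem_of_not_mem hj hi)]
  refine ⟨fun i => c i / g 1, ⟨fun i => div_nonneg (hc_nonneg i) hg_one.le, ?_⟩,
    fun i hi => by simp [hc_zero i hi], ?_⟩
  · rw [← Finset.sum_div, div_eq_one_iff_eq hg_one.ne', hg_apply]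
    simp
  · ext d
    have hd : ∑ i, c i * φ i d = 0 := (hg_apply _).symm.trans (hg_range _ ⟨d, rfl⟩)
    simp [div_mul_eq_mul_div, ← Finset.sum_div, hd]

end Gordan

section ActiveIndices

variable {ι X α : Type*}

/-- The active indices of the maximum of the family `f` at `x`. Stating maximality by pairwise
comparison makes sense for any index type, including empty and infinite ones. -/
def activeIndices [LE α] (f : ι → X → α) (x : X) : Set ι :=
  {i | ∀ j, f j x ≤ f i x}

theorem sup'_eq_of_mem_activeIndices [SemilatticeSup α] [Fintype ι] [Nonempty ι]
    {f : ι → X → α} {x : X} {i : ι} (hi : i ∈ activeIndices f x) :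
    Finset.univ.sup' Finset.univ_nonempty (f · x) = f i x :=
  (Finset.sup'_le _ _ fun j _ => hi j).antisymm (Finset.le_sup' (f · x) (Finset.mem_univ i))

theorem iUnion_mem_activeIndices_eq_univ [LinearOrder α] [Finite ι] [Nonempty ι]
    (f : ι → X → α) : ⋃ i, {x | i ∈ activeIndices f x} = Set.univ :=
  Set.iUnion_eq_univ_iff.mpr fun x => Finite.exists_max (f · x)

theorem mem_activeIndices_of_mem_closure [TopologicalSpace X] [TopologicalSpace α] [Preorder α]
    [OrderClosedTopology α] {f : ι → X → α} {x : X} {i : ι} (hf : ∀ j, ContinuousAt (f j) x)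
    (hi : x ∈ closure {y | i ∈ activeIndices f y}) : i ∈ activeIndices f x := fun j =>
  (hf j).continuousWithinAt.closure_le hi (hf i).continuousWithinAt fun _ hy => hy j

theorem activeIndices_add_right [Add α] [LE α] [AddRightMono α] [AddRightReflectLE α]
    (f : ι → X → α) (g : X → α) (x : X) :
    activeIndices (fun i => f i + g) x = activeIndices f x := by
  simp [activeIndices]

end ActiveIndices

section MaxRule

variable {ι E : Type*} [NormedAddCommGroup E] [NormedSpace ℝ E]

theorem exists_mem_posTangentConeAt_of_iUnion_eq_univ [Finite ι] {s : ι → Set E}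
    (hs : ⋃ i, s i = Set.univ) (x d : E) : ∃ i, d ∈ posTangentConeAt (s i) x := by
  have hfreq : ∃ᶠ t : ℝ in 𝓝[>] 0, ∃ i, x + t • d ∈ s i :=
    (Eventually.of_forall fun t => Set.iUnion_eq_univ_iff.mp hs (x + t • d)).frequently
  obtain ⟨i, hi⟩ := frequently_exists.mp hfreq
  exact ⟨i, mem_posTangentConeAt_of_frequently_mem hi⟩

variable [Fintype ι] [Nonempty ι] {f : ι → E → ℝ} {f' : ι → StrongDual ℝ E} {x : E}

theorem exists_mem_activeIndices_fderiv_nonneg (hcont : ∀ i, ContinuousAt (f i) x)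
    (hf : ∀ i ∈ activeIndices f x, HasFDerivAt (f i) (f' i) x)
    (hmin : IsLocalMin (fun y => Finset.univ.sup' Finset.univ_nonempty (f · y)) x) (d : E) :
    ∃ i ∈ activeIndices f x, 0 ≤ f' i d := by
  obtain ⟨i, hd⟩ :=
    exists_mem_posTangentConeAt_of_iUnion_eq_univ (iUnion_mem_activeIndices_eq_univ f) x d
  have hi : i ∈ activeIndices f x :=
    mem_activeIndices_of_mem_closure hcont (mem_closure_of_nonempty_tangentConeAt ⟨d, hd⟩)
  have hmin_on : IsLocalMinOn (f i) {y | i ∈ activeIndices f y} x := by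
    filter_upwards [hmin.on _, self_mem_nhdsWithin] with y hy hiy
    rwa [sup'_eq_of_mem_activeIndices hi, sup'_eq_of_mem_activeIndices hiy] at hy
  exact ⟨i, hi, hmin_on.hasFDerivWithinAt_nonneg (hf i hi).hasFDerivWithinAt hd⟩

theorem max_rule_stationarity_general {ψ : E → ℝ} {ψ' : StrongDual ℝ E}
    (hcont : ∀ i, ContinuousAt (f i) x)
    (hf : ∀ i ∈ activeIndices f x, HasFDerivAt (f i) (f' i) x) (hψ : HasFDerivAt ψ ψ' x)
    (hmin : IsLocalMin (fun y => Finset.univ.sup' Finset.univ_nonempty (f · y) + ψ y) x) :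
    ∃ w ∈ stdSimplex ℝ ι, (∀ i ∉ activeIndices f x, w i = 0) ∧ ∑ i, w i • f' i + ψ' = 0 := by
  have hactive := activeIndices_add_right f ψ x
  have hdir : ∀ d, ∃ i ∈ activeIndices f x, 0 ≤ (f' i + ψ') d := by
    rw [← hactive]
    exact exists_mem_activeIndices_fderiv_nonneg (f' := fun i => f' i + ψ')
      (fun i => (hcont i).add hψ.continuousAt) (fun i hi => (hf i (hactive ▸ hi)).add hψ)
      (by simpa only [Pi.add_apply, ← Finset.sup'_add] using hmin)
  obtain ⟨w, hw, hw_inactive, hw_sum⟩ :=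
    exists_mem_stdSimplex_sum_smul_eq_zero (fun i => (f' i + ψ').toLinearMap) hdir
  refine ⟨w, hw, hw_inactive, ?_⟩
  ext d
  simpa [mul_add, Finset.sum_add_distrib, ← Finset.sum_mul, hw.2] using congr($hw_sum d)

end MaxRule

/-- **First-order optimality condition for a pointwise maximum.** If `x₀` is a
local minimizer of `x ↦ max_l f_l(x) + ψ(x)` with all functions differentiable
at `x₀`, then there exist multipliers `λ_l ≥ 0` summing to `1`, vanishing on
inactive indices, with `Σ λ_l ∇f_l(x₀) + ∇ψ(x₀) = 0`. -/
theorem max_rule_stationarity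
    {n p : ℕ} (hp : 0 < p)
    (f : Fin p → EuclideanSpace ℝ (Fin n) → ℝ)
    (ψ : EuclideanSpace ℝ (Fin n) → ℝ)
    (x0 : EuclideanSpace ℝ (Fin n))
    (hf : ∀ l, DifferentiableAt ℝ (f l) x0)
    (hψ : DifferentiableAt ℝ ψ x0)
    (hmin : IsLocalMin (fun x =>
      Finset.univ.sup' (Finset.univ_nonempty_iff.mpr (Fin.pos_iff_nonempty.mp hp))
        (fun l => f l x) + ψ x) x0) :
    ∃ lam : Fin p → ℝ,
      (∀ l, 0 ≤ lam l) ∧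
      (∑ l, lam l = 1) ∧
      (∀ l, f l x0 <
        Finset.univ.sup' (Finset.univ_nonempty_iff.mpr (Fin.pos_iff_nonempty.mp hp))
          (fun l' => f l' x0) → lam l = 0) ∧
      ∑ l, lam l • gradient (f l) x0 + gradient ψ x0 = 0 := by
  have := Fin.pos_iff_nonempty.mp hp
  obtain ⟨w, hw, hw_inactive, hw_sum⟩ := max_rule_stationarity_general
    (fun l => (hf l).continuousAt) (fun l _ => (hf l).hasFDerivAt) hψ.hasFDerivAt hmin
  exact ⟨w, hw.1, hw.2,
    fun l hl => hw_inactive l fun hl_active => hl.ne' (sup'_eq_of_mem_activeIndices hl_active), by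
    simpa [gradient] using congr((InnerProductSpace.toDual ℝ _).symm $hw_sum)⟩
end

section
/- Let f_l : ℝⁿ → ℝ (l = 1,…,p), g_i : ℝⁿ → ℝ (i = 1,…,m) and h_j : ℝⁿ → ℝ (j = 1,…,r) be continuously differentiable, and let x̄ ∈ F. Suppose there exist sequences {x^k} ⊂ ℝⁿ, {(λ^k, μ^k, τ^k)} ⊂ ℝ^p_+ × ℝ^m_+ × ℝ^r and positive reals b_k, c_k > 0 such that: (A0) x^k → x̄; (A1) ‖Σ_{l=1}^p λ_l^k ∇f_l(x^k) + Σ_{i=1}^m μ_i^k ∇g_i(x^k) + Σ_{j=1}^r τ_j^k ∇h_j(x^k)‖ → 0; (A2) Σ_{l=1}^p λ_l^k = 1; (A3) for each i with g_i(x̄) < 0, μ_i^k = 0 for all large k; and (E1) μ_i^k = b_k · max(g_i(x^k), 0) for all i and τ_j^k = c_k · h_j(x^k) ≥ 0 for all j and all k. Assume further that the quasi-normality constraint qualification (QNCQ) holds at x̄: there is no (μ, τ) ∈ ℝ^m_+ × ℝ^r with (μ, τ) ≠ 0, Σ_{i=1}^m μ_i ∇g_i(x̄) + Σ_{j=1}^r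 τ_j ∇h_j(x̄) = 0, and such that every neighborhood of x̄ contains a point x with g_i(x) > 0 for all i with μ_i > 0 and τ_j h_j(x) > 0 for all j with τ_j ≠ 0. Then the KKT condition holds at x̄: there exists (λ, μ, τ) ∈ ℝ^p_+ × ℝ^m_+ × ℝ^r with λ ≠ 0, Σ_{l=1}^p λ_l ∇f_l(x̄) + Σ_{i=1}^m μ_i ∇g_i(x̄) + Σ_{j=1}^r τ_j ∇h_j(x̄) = 0, and μ_i g_i(x̄) = 0 for every i = 1,…,m. -/
open Filter Topology

/-!
Since `∑ λˡ = 1`, the multipliers `(λᵏ, μᵏ, τᵏ)` stay away from `0`, so after normalization they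
cluster at some nonzero `(λ, μ, τ)`, which is stationary at `x̄` because gradients are continuous.
The penalty form of the multipliers makes every `xᵏ` violate each constraint whose multiplier is
active, with the matching sign. A limit multiplier that is nonzero keeps its sign along the
sequence, so the same holds for `(μ, τ)` at points arbitrarily close to `x̄`. If `λ` were `0`, then
`(μ, τ)` would be precisely what quasi-normality forbids; and `μ i > 0` forces `g i > 0` at points
tending to `x̄`, hence `g i x̄ = 0`, which is complementary slackness.
-/

section Gradient

variable {𝕜 E ι α : Type*} [RCLike 𝕜] [NormedAddCommGroup E] [InnerProductSpace 𝕜 E]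
  [CompleteSpace E]

theorem continuousAt_gradient {φ : E → 𝕜} {a : E} {N : WithTop ℕ∞} (hφ : ContDiffAt 𝕜 N φ a)
    (hN : N ≠ 0) : ContinuousAt (gradient φ) a :=
  (InnerProductSpace.toDual 𝕜 E).symm.continuous.continuousAt.comp (hφ.continuousAt_fderiv hN)

variable [Fintype ι]

/-- The linear combination `∑ i, w i • ∇(F i)(x)` of the gradients of a finite family of functions,
that is, the contribution of one block of multipliers to the gradient of the Lagrangian. -/
noncomputable def gradientCombination (F : ι → E → 𝕜) (w : ι → 𝕜) (x : E) : E :=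
  ∑ i, w i • gradient (F i) x

theorem gradientCombination_smul (F : ι → E → 𝕜) (s : 𝕜) (w : ι → 𝕜) (x : E) :
    gradientCombination F (s • w) x = s • gradientCombination F w x := by
  simp only [gradientCombination, Pi.smul_apply, smul_assoc, Finset.smul_sum]

theorem gradientCombination_zero (F : ι → E → 𝕜) (x : E) : gradientCombination F 0 x = 0 := by
  simp only [gradientCombination, Pi.zero_apply, zero_smul, Finset.sum_const_zero]

theorem tendsto_gradientCombination {F : ι → E → 𝕜} {a : E} (hF : ∀ i, ContDiffAt 𝕜 1 (F i) a)
    {l : Filter α} {y : α → E} (hy : Tendsto y l (𝓝 a))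
    {w : α → ι → 𝕜} {w₀ : ι → 𝕜} (hw : Tendsto w l (𝓝 w₀)) :
    Tendsto (fun k => gradientCombination F (w k) (y k)) l (𝓝 (gradientCombination F w₀ a)) :=
  tendsto_finsetSum _ fun i _ =>
    (tendsto_pi_nhds.1 hw i).smul ((continuousAt_gradient (hF i) one_ne_zero).tendsto.comp hy)

end Gradient

section Normalization

theorem exists_tendsto_inv_norm_smul {α V : Type*} [NormedAddCommGroup V] [NormedSpace ℝ V]
    [ProperSpace V] (U : Ultrafilter α) {v : α → V} (hv : ∀ k, v k ≠ 0) :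
    ∃ u ≠ 0, Tendsto (fun k => ‖v k‖⁻¹ • v k) U (𝓝 u) := by
  have hsphere : ∀ k, ‖v k‖⁻¹ • v k ∈ Metric.sphere (0 : V) 1 := fun k => by
    simp [norm_smul, hv k]
  obtain ⟨u, hu, hlim⟩ := (isCompact_sphere (0 : V) 1).ultrafilter_le_nhds
    (U.map fun k => ‖v k‖⁻¹ • v k) (tendsto_principal.2 (Eventually.of_forall hsphere))
  exact ⟨u, ne_zero_of_mem_unit_sphere ⟨u, hu⟩, hlim⟩

theorem inv_card_le_norm_of_sum_eq_one {ι : Type*} [Fintype ι] {w : ι → ℝ} (hw : ∑ i, w i = 1) :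
    (Fintype.card ι : ℝ)⁻¹ ≤ ‖w‖ := by
  have hone : 1 ≤ Fintype.card ι * ‖w‖ := calc
    (1 : ℝ) = ‖∑ i, w i‖ := by rw [hw, norm_one]
    _ ≤ ∑ i, ‖w i‖ := norm_sum_le _ _
    _ ≤ Fintype.card ι * ‖w‖ := by simpa using Pi.sum_norm_apply_le_norm w
  simpa only [mul_one] using inv_mul_le_of_le_mul₀ (Nat.cast_nonneg _) (norm_nonneg w) hone

end Normalization

section ComplementaryViolation

variable {X κ σ α : Type*}

/-- The point `z` violates every constraint with an active multiplier: `g i z ≤ 0` fails whenever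
`μ i > 0`, and `h j z = 0` fails, on the side given by the sign of `τ j`, whenever `τ j ≠ 0`.
Such points are the ones occurring in quasi-normality and in the enhanced Fritz John conditions. -/
def ViolatesActive (g : κ → X → ℝ) (h : σ → X → ℝ) (μ : κ → ℝ) (τ : σ → ℝ) (z : X) : Prop :=
  (∀ i, 0 < μ i → 0 < g i z) ∧ ∀ j, τ j ≠ 0 → 0 < τ j * h j z

variable {g : κ → X → ℝ} {h : σ → X → ℝ} {μ : κ → ℝ} {τ : σ → ℝ}

theorem violatesActive_of_penalty {z : X} {b c : ℝ} (hb : 0 < b) (hc : 0 < c)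
    (hμ : ∀ i, μ i = b * max (g i z) 0) (hτ : ∀ j, τ j = c * h j z) :
    ViolatesActive g h μ τ z := by
  refine ⟨fun i hi => ?_, fun j hj => ?_⟩
  · simpa [hμ, hb] using hi
  · have hh : h j z ≠ 0 := right_ne_zero_of_mul (hτ j ▸ hj)
    rw [hτ, mul_assoc]
    exact mul_pos hc (mul_self_pos.2 hh)

theorem eventually_violatesActive_of_tendsto_smul [Finite κ] [Finite σ] {l : Filter α}
    {x : α → X} {mu : α → κ → ℝ} {tau : α → σ → ℝ} {s : α → ℝ} (hs : ∀ k, 0 ≤ s k)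
    (hmu : Tendsto (fun k => s k • mu k) l (𝓝 μ)) (htau : Tendsto (fun k => s k • tau k) l (𝓝 τ))
    (hviol : ∀ k, ViolatesActive g h (mu k) (tau k) (x k)) :
    ∀ᶠ k in l, ViolatesActive g h μ τ (x k) := by
  refine (eventually_all.2 fun i => ?_).and (eventually_all.2 fun j => ?_)
  · refine eventually_imp_distrib_left.2 fun hi => ?_
    filter_upwards [(tendsto_pi_nhds.1 hmu i).eventually_const_lt hi] with k hk
    exact (hviol k).1 i (pos_of_mul_pos_right hk (hs k))
  · refine eventually_imp_distrib_left.2 fun hj => ?_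
    have hlim : Tendsto (fun k => s k * tau k j * τ j) l (𝓝 (τ j * τ j)) :=
      (tendsto_pi_nhds.1 htau j).mul_const (τ j)
    filter_upwards [hlim.eventually_const_lt (mul_self_pos.2 hj)] with k hk
    have hsign : 0 < tau k j * τ j := pos_of_mul_pos_right (mul_assoc (s k) _ _ ▸ hk) (hs k)
    have hviol_j : 0 < tau k j * h j (x k) := (hviol k).2 j (left_ne_zero_of_mul hsign.ne')
    have hprod : 0 < tau k j ^ 2 * (τ j * h j (x k)) := by linarith [mul_pos hsign hviol_j]
    exact pos_of_mul_pos_right hprod (sq_nonneg _)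

end ComplementaryViolation

section FritzJohn

variable {α ι κ σ E : Type*} [Fintype ι] [Fintype κ] [Fintype σ]
  [NormedAddCommGroup E] [InnerProductSpace ℝ E] [CompleteSpace E]

/-- Nonzero Fritz John multipliers at `x̄` in the enhanced sense of Bertsekas: instead of
complementary slackness, points violating all constraints with active multipliers accumulate
at `x̄`. -/
structure IsEnhancedFritzJohn (f : ι → E → ℝ) (g : κ → E → ℝ) (h : σ → E → ℝ) (xbar : E)
    (lam : ι → ℝ) (μ : κ → ℝ) (τ : σ → ℝ) : Prop where
  nonneg_objective : ∀ i, 0 ≤ lam i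
  nonneg_inequality : ∀ i, 0 ≤ μ i
  ne_zero : (lam, μ, τ) ≠ 0
  stationary : gradientCombination f lam xbar + gradientCombination g μ xbar
    + gradientCombination h τ xbar = 0
  frequently_violatesActive : ∃ᶠ z in 𝓝 xbar, ViolatesActive g h μ τ z

/-- The quasi-normality constraint qualification (QNCQ) at `x̄`, which rules out enhanced Fritz John
multipliers whose objective part is zero. -/
def QuasiNormal (g : κ → E → ℝ) (h : σ → E → ℝ) (xbar : E) : Prop :=
  ¬ ∃ (μ : κ → ℝ) (τ : σ → ℝ), (∀ i, 0 ≤ μ i) ∧ (μ ≠ 0 ∨ τ ≠ 0) ∧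
    gradientCombination g μ xbar + gradientCombination h τ xbar = 0 ∧
    ∃ᶠ z in 𝓝 xbar, ViolatesActive g h μ τ z

variable {f : ι → E → ℝ} {g : κ → E → ℝ} {h : σ → E → ℝ} {xbar : E}

namespace IsEnhancedFritzJohn

variable {lam : ι → ℝ} {μ : κ → ℝ} {τ : σ → ℝ}

theorem objective_ne_zero (H : IsEnhancedFritzJohn f g h xbar lam μ τ)
    (hqn : QuasiNormal g h xbar) : lam ≠ 0 := by
  rintro rfl
  refine hqn ⟨μ, τ, H.nonneg_inequality, ?_, ?_, H.frequently_violatesActive⟩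
  · simpa [Prod.ext_iff, imp_iff_not_or] using H.ne_zero
  · simpa only [gradientCombination_zero, zero_add] using H.stationary

theorem complementary (H : IsEnhancedFritzJohn f g h xbar lam μ τ) {i : κ}
    (hcont : ContinuousAt (g i) xbar) (hfeas : g i xbar ≤ 0) : μ i * g i xbar = 0 := by
  rcases (H.nonneg_inequality i).eq_or_lt with hi | hi
  · rw [← hi, zero_mul]
  · have hpos : ∃ᶠ z in 𝓝 xbar, 0 < g i z :=
      H.frequently_violatesActive.mono fun _ hz => hz.1 i hi
    have hge : 0 ≤ g i xbar := by
      by_contra! hneg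
      exact hpos ((hcont.eventually_lt_const hneg).mono fun _ hz => hz.not_gt)
    rw [hfeas.antisymm hge, mul_zero]

end IsEnhancedFritzJohn

variable {l : Filter α} [l.NeBot] {x : α → E} {lam : α → ι → ℝ} {mu : α → κ → ℝ}
  {tau : α → σ → ℝ}

theorem exists_isEnhancedFritzJohn
    (hf : ∀ i, ContDiffAt ℝ 1 (f i) xbar) (hg : ∀ i, ContDiffAt ℝ 1 (g i) xbar)
    (hh : ∀ j, ContDiffAt ℝ 1 (h j) xbar) (hx : Tendsto x l (𝓝 xbar))
    (hlam : ∀ k i, 0 ≤ lam k i) (hmu : ∀ k i, 0 ≤ mu k i)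
    {δ : ℝ} (hδ : 0 < δ) (hnorm : ∀ k, δ ≤ ‖(lam k, mu k, tau k)‖)
    (hstat : Tendsto (fun k => gradientCombination f (lam k) (x k)
      + gradientCombination g (mu k) (x k) + gradientCombination h (tau k) (x k)) l (𝓝 0))
    (hviol : ∀ k, ViolatesActive g h (mu k) (tau k) (x k)) :
    ∃ lam₀ μ τ, IsEnhancedFritzJohn f g h xbar lam₀ μ τ := by
  set U : Ultrafilter α := Ultrafilter.of l
  have hU : (U : Filter α) ≤ l := Ultrafilter.of_le l
  obtain ⟨⟨lam₀, μ, τ⟩, hne, hlim⟩ := exists_tendsto_inv_norm_smul U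
    (v := fun k => (lam k, mu k, tau k)) fun k => norm_pos_iff.1 (hδ.trans_le (hnorm k))
  set s : α → ℝ := fun k => ‖(lam k, mu k, tau k)‖⁻¹
  have hs : ∀ k, 0 ≤ s k := fun k => inv_nonneg.2 (norm_nonneg _)
  have hlam_lim : Tendsto (fun k => s k • lam k) U (𝓝 lam₀) := hlim.fst_nhds
  have hmu_lim : Tendsto (fun k => s k • mu k) U (𝓝 μ) := hlim.snd_nhds.fst_nhds
  have htau_lim : Tendsto (fun k => s k • tau k) U (𝓝 τ) := hlim.snd_nhds.snd_nhds
  have hxU : Tendsto x U (𝓝 xbar) := hx.mono_left hU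
  have hs_bdd : IsBoundedUnder (· ≤ ·) U (norm ∘ s) := isBoundedUnder_of ⟨δ⁻¹, fun k => by
    simpa only [Function.comp_apply, Real.norm_of_nonneg (hs k)] using
      inv_anti₀ hδ (hnorm k)⟩
  have hscaled := hs_bdd.smul_tendsto_zero (hstat.mono_left hU)
  simp only [smul_add, ← gradientCombination_smul] at hscaled
  exact ⟨lam₀, μ, τ,
    { nonneg_objective := ge_of_tendsto' hlam_lim fun k => smul_nonneg (hs k) (hlam k)
      nonneg_inequality := ge_of_tendsto' hmu_lim fun k => smul_nonneg (hs k) (hmu k)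
      ne_zero := hne
      stationary := tendsto_nhds_unique
        (((tendsto_gradientCombination hf hxU hlam_lim).add
          (tendsto_gradientCombination hg hxU hmu_lim)).add
          (tendsto_gradientCombination hh hxU htau_lim)) hscaled
      frequently_violatesActive := hxU.frequently
        (eventually_violatesActive_of_tendsto_smul hs hmu_lim htau_lim hviol).frequently }⟩

theorem akkt_qncq_implies_kkt_general
    (hf : ∀ i, ContDiffAt ℝ 1 (f i) xbar) (hg : ∀ i, ContDiffAt ℝ 1 (g i) xbar)
    (hh : ∀ j, ContDiffAt ℝ 1 (h j) xbar) (hxg : ∀ i, g i xbar ≤ 0) (hx : Tendsto x l (𝓝 xbar))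
    (hlam : ∀ k i, 0 ≤ lam k i) (hmu : ∀ k i, 0 ≤ mu k i) (hsum : ∀ k, ∑ i, lam k i = 1)
    (hstat : Tendsto (fun k => gradientCombination f (lam k) (x k)
      + gradientCombination g (mu k) (x k) + gradientCombination h (tau k) (x k)) l (𝓝 0))
    (hviol : ∀ k, ViolatesActive g h (mu k) (tau k) (x k)) (hqn : QuasiNormal g h xbar) :
    ∃ (lam₀ : ι → ℝ) (μ : κ → ℝ) (τ : σ → ℝ), (∀ i, 0 ≤ lam₀ i) ∧ (∀ i, 0 ≤ μ i) ∧ lam₀ ≠ 0 ∧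
      gradientCombination f lam₀ xbar + gradientCombination g μ xbar
        + gradientCombination h τ xbar = 0 ∧
      ∀ i, μ i * g i xbar = 0 := by
  obtain ⟨k₀⟩ := l.nonempty_of_neBot
  have hcard : 0 < (Fintype.card ι : ℝ)⁻¹ := by
    have : Nonempty ι := not_isEmpty_iff.1 fun _ => by simpa using hsum k₀
    positivity
  have hnorm : ∀ k, (Fintype.card ι : ℝ)⁻¹ ≤ ‖(lam k, mu k, tau k)‖ := fun k =>
    (inv_card_le_norm_of_sum_eq_one (hsum k)).trans (norm_fst_le (lam k, mu k, tau k))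
  obtain ⟨lam₀, μ, τ, H⟩ :=
    exists_isEnhancedFritzJohn hf hg hh hx hlam hmu hcard hnorm hstat hviol
  exact ⟨lam₀, μ, τ, H.nonneg_objective, H.nonneg_inequality, H.objective_ne_zero hqn,
    H.stationary, fun i => H.complementary (hg i).continuousAt (hxg i)⟩

end FritzJohn

/-- **AKKT + (E1) + QNCQ implies KKT** (smooth case). -/
theorem akkt_qncq_implies_kkt
    {n p m r : ℕ} (hp : 0 < p)
    (f : Fin p → EuclideanSpace ℝ (Fin n) → ℝ)
    (g : Fin m → EuclideanSpace ℝ (Fin n) → ℝ)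
    (h : Fin r → EuclideanSpace ℝ (Fin n) → ℝ)
    (hf : ∀ l, ContDiff ℝ 1 (f l))
    (hg : ∀ i, ContDiff ℝ 1 (g i))
    (hh : ∀ j, ContDiff ℝ 1 (h j))
    (xbar : EuclideanSpace ℝ (Fin n))
    (hxg : ∀ i, g i xbar ≤ 0) (hxh : ∀ j, h j xbar = 0)
    (x : ℕ → EuclideanSpace ℝ (Fin n))
    (lam : ℕ → Fin p → ℝ) (mu : ℕ → Fin m → ℝ) (tau : ℕ → Fin r → ℝ)
    (b c : ℕ → ℝ) (hb : ∀ k, 0 < b k) (hc : ∀ k, 0 < c k)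
    (hlam : ∀ k l, 0 ≤ lam k l) (hmu : ∀ k i, 0 ≤ mu k i)
    -- (A0)
    (hx : Tendsto x atTop (𝓝 xbar))
    -- (A1)
    (hA1 : Tendsto (fun k => ‖∑ l, lam k l • gradient (f l) (x k)
      + ∑ i, mu k i • gradient (g i) (x k)
      + ∑ j, tau k j • gradient (h j) (x k)‖) atTop (𝓝 0))
    -- (A2)
    (hA2 : ∀ k, ∑ l, lam k l = 1)
    -- (A3)
    (hA3 : ∀ i, g i xbar < 0 → ∀ᶠ k in atTop, mu k i = 0)
    -- (E1)
    (hE1g : ∀ k i, mu k i = b k * max (g i (x k)) 0)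
    (hE1h : ∀ k j, tau k j = c k * h j (x k) ∧ 0 ≤ tau k j)
    -- QNCQ
    (hQNCQ : ¬ ∃ (μ : Fin m → ℝ) (τ : Fin r → ℝ),
      (∀ i, 0 ≤ μ i) ∧ (μ ≠ 0 ∨ τ ≠ 0) ∧
      (∑ i, μ i • gradient (g i) xbar + ∑ j, τ j • gradient (h j) xbar = 0) ∧
      (∀ U ∈ 𝓝 xbar, ∃ z ∈ U,
        (∀ i, 0 < μ i → 0 < g i z) ∧ (∀ j, τ j ≠ 0 → 0 < τ j * h j z))) :
    ∃ (lam0 : Fin p → ℝ) (mu0 : Fin m → ℝ) (tau0 : Fin r → ℝ),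
      (∀ l, 0 ≤ lam0 l) ∧ (∀ i, 0 ≤ mu0 i) ∧ lam0 ≠ 0 ∧
      (∑ l, lam0 l • gradient (f l) xbar + ∑ i, mu0 i • gradient (g i) xbar
        + ∑ j, tau0 j • gradient (h j) xbar = 0) ∧
      (∀ i, mu0 i * g i xbar = 0) :=
  akkt_qncq_implies_kkt_general (fun l => (hf l).contDiffAt) (fun i => (hg i).contDiffAt)
    (fun j => (hh j).contDiffAt) hxg hx hlam hmu hA2 (tendsto_zero_iff_norm_tendsto_zero.2 hA1)
    (fun k => violatesActive_of_penalty (hb k) (hc k) (hE1g k) fun j => (hE1h k j).1)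
    (by simpa only [QuasiNormal, gradientCombination, ViolatesActive, frequently_iff] using hQNCQ)
end
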